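/- arXiv:1911.04004 — 4 statements merged into one kernel-verified Lean document; each statement's English description precedes it below -/
import Mathlib

section
/- In a repeated purely adversarial Stackelberg game, the Stackelberg regret is upper bounded by the external regret. Precisely: let 𝒜 be a nonempty finite action set, 𝒳 a response space, ℓ : 𝒜 × 𝒳 → ℝ a loss function, and for each round t ∈ {1,…,T} let r_t : 𝒜 → 𝒳 be the agent's response function. Assume the game is purely adversarial: for all t and all α, α' ∈ 𝒜, ℓ(α, r_t(α)) ≥ ℓ(α, r_t(α')). Then for every sequence of actions α_1,…,α_T ∈ 𝒜, the Stackelberg regret ∑_{t=1}^T ℓ(α_t, r_t(α_t)) − min_{α ∈ 𝒜} ∑_{t=1}^T ℓ(α, r_t(α)) is at most the external regret ∑_{t=1}^T ℓ(α_t, r_t(α_t)) − min_{α ∈ 𝒜} ∑_{t=1}^T ℓ(α, r_t(α_t)); equivalently, min_{α ∈ 𝒜} ∑_{t=1}^T ℓ(α, r_t(α_t)) ≤ min_{α ∈ 𝒜} ∑_{t=1}^T ℓ(α, r_t(α)). -/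
theorem isGLB_range_inf'_univ {A R : Type*} [Fintype A] [Nonempty A] [SemilatticeInf R]
    (f : A → R) : IsGLB (Set.range f) (Finset.univ.inf' Finset.univ_nonempty f) :=
  ⟨Set.forall_mem_range.2 fun α => Finset.inf'_le f (Finset.mem_univ α),
    fun _ hb => Finset.le_inf' _ _ fun α _ => hb (Set.mem_range_self α)⟩

/-- The defining property of a purely adversarial Stackelberg game: in every round, responding to
the action the learner has committed to inflicts at least the loss of any other response.
Rounds are indexed by an arbitrary type `ι`, and `r t` is the agent's response function in
round `t`. -/
def IsPurelyAdversarial {ι A X R : Type*} [LE R] (ℓ : A → X → R) (r : ι → A → X) : Prop :=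
  ∀ t α α', ℓ α (r t α') ≤ ℓ α (r t α)

namespace IsPurelyAdversarial

variable {ι A X R : Type*} [Fintype ι] [AddCommMonoid R] [Preorder R] [AddLeftMono R]
  {ℓ : A → X → R} {r : ι → A → X}

theorem sum_loss_le (h : IsPurelyAdversarial ℓ r) (a : ι → A) (α : A) :
    ∑ t, ℓ α (r t (a t)) ≤ ∑ t, ℓ α (r t α) :=
  Finset.sum_le_sum fun t _ => h t α (a t)

theorem lowerBounds_subset (h : IsPurelyAdversarial ℓ r) (a : ι → A) :
    lowerBounds (Set.range fun α => ∑ t, ℓ α (r t (a t))) ⊆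
      lowerBounds (Set.range fun α => ∑ t, ℓ α (r t α)) :=
  fun m hm => Set.forall_mem_range.2 fun α =>
    calc
      m ≤ ∑ t, ℓ α (r t (a t)) := hm (Set.mem_range_self α)
      _ ≤ ∑ t, ℓ α (r t α) := h.sum_loss_le a α

end IsPurelyAdversarial

-- `IsGLB` rather than `⨅`: the latter takes a junk value when the total losses are unbounded below.
theorem pasg_stackelberg_regret_le_external_regret_general
    {ι A X R : Type*} [Fintype ι] [AddCommGroup R] [Preorder R] [AddLeftMono R]
    {ℓ : A → X → R} {r : ι → A → X} (h : IsPurelyAdversarial ℓ r) {a : ι → A} {mExt mStack : R}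
    (hExt : IsGLB (Set.range fun α => ∑ t, ℓ α (r t (a t))) mExt)
    (hStack : IsGLB (Set.range fun α => ∑ t, ℓ α (r t α)) mStack) :
    (∑ t, ℓ (a t) (r t (a t))) - mStack ≤ (∑ t, ℓ (a t) (r t (a t))) - mExt :=
  have benchmark_le : mExt ≤ mStack := hStack.2 (h.lowerBounds_subset a hExt.1)
  sub_le_sub_left benchmark_le _

/-- In a repeated purely adversarial Stackelberg game (the agent's best response to the
committed action inflicts the highest loss), the Stackelberg regret is upper bounded by
the external regret. -/
theorem pasg_stackelberg_regret_le_external_regret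
    {A X : Type*} [Fintype A] [Nonempty A]
    (T : ℕ) (ℓ : A → X → ℝ) (r : Fin T → A → X)
    (hPASG : ∀ (t : Fin T) (α α' : A), ℓ α (r t α) ≥ ℓ α (r t α'))
    (a : Fin T → A) :
    (∑ t, ℓ (a t) (r t (a t))) -
      (Finset.univ.inf' Finset.univ_nonempty fun α : A => ∑ t, ℓ α (r t α)) ≤
    (∑ t, ℓ (a t) (r t (a t))) -
      (Finset.univ.inf' Finset.univ_nonempty fun α : A => ∑ t, ℓ α (r t (a t))) := by
  exact pasg_stackelberg_regret_le_external_regret_general hPASG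
    (isGLB_range_inf'_univ _) (isGLB_range_inf'_univ _)
end

section
/- In a repeated purely cooperative Stackelberg game, the external regret is upper bounded by the Stackelberg regret. Precisely: let 𝒜 be a nonempty finite action set, 𝒳 a response space, ℓ : 𝒜 × 𝒳 → ℝ a loss function, and for each round t ∈ {1,…,T} let r_t : 𝒜 → 𝒳 be the agent's response function. Assume the game is purely cooperative: for all t and all α, α' ∈ 𝒜, ℓ(α, r_t(α)) ≤ ℓ(α, r_t(α')). Then for every sequence of actions α_1,…,α_T ∈ 𝒜, the external regret ∑_{t=1}^T ℓ(α_t, r_t(α_t)) − min_{α ∈ 𝒜} ∑_{t=1}^T ℓ(α, r_t(α_t)) is at most the Stackelberg regret ∑_{t=1}^T ℓ(α_t, r_t(α_t)) − min_{α ∈ 𝒜} ∑_{t=1}^T ℓ(α, r_t(α)). -/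
/-- Pure cooperation in a repeated Stackelberg game with rounds `ι`, loss `ℓ` and response
functions `r`: the agent's response to the committed action `α` inflicts on `α` the lowest loss
among all its responses of that round. -/
def IsPurelyCooperative {ι A X M : Type*} [LE M] (ℓ : A → X → M) (r : ι → A → X) : Prop :=
  ∀ (t : ι) (α α' : A), ℓ α (r t α) ≤ ℓ α (r t α')

namespace IsPurelyCooperative

variable {ι A X M : Type*} [Fintype ι] {ℓ : A → X → M} {r : ι → A → X}

theorem sum_loss_self_response_le [AddCommMonoid M] [Preorder M] [AddLeftMono M]
    (h : IsPurelyCooperative ℓ r) (a : ι → A) (α : A) :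
    ∑ t, ℓ α (r t α) ≤ ∑ t, ℓ α (r t (a t)) :=
  Finset.sum_le_sum fun t _ => h t α (a t)

theorem iInf_sum_loss_self_response_le [Nonempty A] [AddCommMonoid M]
    [ConditionallyCompleteLattice M] [AddLeftMono M] (h : IsPurelyCooperative ℓ r)
    (hbdd : BddBelow (Set.range fun α => ∑ t, ℓ α (r t α))) (a : ι → A) :
    ⨅ α, ∑ t, ℓ α (r t α) ≤ ⨅ α, ∑ t, ℓ α (r t (a t)) :=
  le_ciInf fun α => (ciInf_le hbdd α).trans (h.sum_loss_self_response_le a α)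

end IsPurelyCooperative

theorem pcsg_external_regret_le_stackelberg_regret_general
    {ι A X M : Type*} [Fintype ι] [Nonempty A]
    [AddCommGroup M] [ConditionallyCompleteLattice M] [AddLeftMono M]
    {ℓ : A → X → M} {r : ι → A → X} (h : IsPurelyCooperative ℓ r)
    (hbdd : BddBelow (Set.range fun α => ∑ t, ℓ α (r t α))) (a : ι → A) :
    (∑ t, ℓ (a t) (r t (a t))) - ⨅ α, ∑ t, ℓ α (r t (a t)) ≤
      (∑ t, ℓ (a t) (r t (a t))) - ⨅ α, ∑ t, ℓ α (r t α) :=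
  sub_le_sub_left (h.iInf_sum_loss_self_response_le hbdd a) _

/-- In a repeated purely cooperative Stackelberg game (the agent's best response to the
committed action inflicts the lowest loss), the external regret is upper bounded by
the Stackelberg regret. -/
theorem pcsg_external_regret_le_stackelberg_regret
    {A X : Type*} [Fintype A] [Nonempty A]
    (T : ℕ) (ℓ : A → X → ℝ) (r : Fin T → A → X)
    (hPCSG : ∀ (t : Fin T) (α α' : A), ℓ α (r t α) ≤ ℓ α (r t α'))
    (a : Fin T → A) :
    (∑ t, ℓ (a t) (r t (a t))) -
      (Finset.univ.inf' Finset.univ_nonempty fun α : A => ∑ t, ℓ α (r t (a t))) ≤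
    (∑ t, ℓ (a t) (r t (a t))) -
      (Finset.univ.inf' Finset.univ_nonempty fun α : A => ∑ t, ℓ α (r t α)) := by
  simp only [Finset.inf'_univ_eq_ciInf]
  exact pcsg_external_regret_le_stackelberg_regret_general hPCSG (Set.finite_range _).bddBelow a
end

section
/- Exact regret identities in the incompatibility instance: define the expected-loss matrix L : {h, h'} × {h, h'} → ℝ by L(h, h) = 1/5, L(h, h') = 9/10, L(h', h) = 1/20, L(h', h') = 1/4, where L(a, b) is the learner's expected loss when playing classifier a against agent responses tailored to classifier b. Fix a horizon T ≥ 1 and a sequence a_1, …, a_T ∈ {h, h'}, and let n = |{t : a_t = h'}|. Then: (i) min_{c ∈ {h,h'}} ∑_{t=1}^T L(c, a_t) = (1/20)·(T − n) + (1/4)·n, so the external regret equals R(T) = ∑_{t=1}^T L(a_t, a_t) − min_c ∑_t L(c, a_t) = (3/20)·(T − n); (ii) min_{c ∈ {h,h'}} T·L(c, c) = T/5, so the Stackelberg regret equals 𝓡(T) = ∑_{t=1}^T L(a_t, a_t) − T/5 = (1/20)·n; and consequently (iii) R(T) + 3·𝓡(T) = (3/20)·T. -/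
/-!
Against either response, `h'` does better than `h`, so `h'` is the best fixed action in hindsight
and only the rounds in which `h` is played contribute to the external regret. On the diagonal the
order is reversed: `h` is the Stackelberg action, and only the rounds in which `h'` is played
contribute to the Stackelberg regret. Every round is thus charged to exactly one of the two regrets.
-/

open Finset

theorem inf'_univ_bool {R : Type*} [SemilatticeInf R] (f : Bool → R) :
    univ.inf' univ_nonempty f = f false ⊓ f true :=
  le_antisymm (le_inf (inf'_le f (mem_univ _)) (inf'_le f (mem_univ _)))
    (le_inf' _ _ fun b _ ↦ by cases b <;> simp)

section Regret

variable {ι A R : Type*} [Fintype ι] [Fintype A] [Nonempty A] [CommRing R] [LinearOrder R]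

/-- The cumulative loss of the best fixed action when the agents keep the responses they made to
the actions `a` actually played. Here `L c b` is the loss of `c` against responses to `b`, and `ι`
indexes the rounds. -/
def bestFixedLoss (L : A → A → R) (a : ι → A) : R :=
  univ.inf' univ_nonempty fun c ↦ ∑ t, L c (a t)

/-- The cumulative loss over `T` rounds of the best fixed action when the agents respond to that
action itself. -/
def bestStackelbergLoss (L : A → A → R) (T : ℕ) : R :=
  univ.inf' univ_nonempty fun c ↦ (T : R) * L c c

/-- The regret of the play `a` relative to the best fixed action against the realized responses. -/
def externalRegret (L : A → A → R) (a : ι → A) : R :=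
  ∑ t, L (a t) (a t) - bestFixedLoss L a

/-- The regret of the play `a` relative to the best fixed action had agents responded to it. -/
def stackelbergRegret (L : A → A → R) (a : ι → A) : R :=
  ∑ t, L (a t) (a t) - bestStackelbergLoss L (Fintype.card ι)

variable [IsOrderedRing R] {L : A → A → R} {d : A}

theorem bestFixedLoss_eq_of_dominant (hd : ∀ c b, L d b ≤ L c b) (a : ι → A) :
    bestFixedLoss L a = ∑ t, L d (a t) :=
  le_antisymm (inf'_le _ (mem_univ d))
    (le_inf' _ _ fun c _ ↦ sum_le_sum fun t _ ↦ hd c (a t))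

theorem bestStackelbergLoss_eq_of_forall_le (hd : ∀ c, L d d ≤ L c c) (T : ℕ) :
    bestStackelbergLoss L T = T * L d d :=
  le_antisymm (inf'_le _ (mem_univ d))
    (le_inf' _ _ fun c _ ↦ mul_le_mul_of_nonneg_left (hd c) T.cast_nonneg)

end Regret

section TwoActions

variable {ι R : Type*} [Fintype ι] [CommRing R]

theorem sum_comp_bool (f : Bool → R) (a : ι → Bool) :
    ∑ t, f (a t) = f false * (Fintype.card ι - #{t | a t = true}) + f true * #{t | a t = true} := by
  have card_false : (#{t | a t = false} : R) = Fintype.card ι - #{t | a t = true} := by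
    have card_split := card_filter_add_card_filter_not (s := univ) fun t ↦ a t = true
    simp only [Bool.not_eq_true, card_univ] at card_split
    rw [← card_split, Nat.cast_add, add_sub_cancel_left]
  calc ∑ t, f (a t)
      = ∑ b, ∑ t with a t = b, f b := by
        rw [← sum_fiberwise' univ a f]
    _ = f false * #{t | a t = false} + f true * #{t | a t = true} := by
        simp only [sum_const, Fintype.sum_bool, nsmul_eq_mul]
        ring
    _ = _ := by rw [card_false]

variable [LinearOrder R] [IsOrderedRing R] {L : Bool → Bool → R}

theorem externalRegret_bool (hdom : ∀ c b, L true b ≤ L c b) (a : ι → Bool) :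
    externalRegret L a =
      (L false false - L true false) * (Fintype.card ι - #{t | a t = true}) := by
  rw [externalRegret, bestFixedLoss_eq_of_dominant hdom, sum_comp_bool (fun b ↦ L b b),
    sum_comp_bool (L true)]
  ring

theorem stackelbergRegret_bool (hdiag : ∀ c, L false false ≤ L c c) (a : ι → Bool) :
    stackelbergRegret L a = (L true true - L false false) * #{t | a t = true} := by
  rw [stackelbergRegret, bestStackelbergLoss_eq_of_forall_le hdiag, sum_comp_bool (fun b ↦ L b b)]
  ring

theorem externalRegret_stackelbergRegret_tradeoff (hdom : ∀ c b, L true b ≤ L c b)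
    (hdiag : ∀ c, L false false ≤ L c c) (a : ι → Bool) :
    (L true true - L false false) * externalRegret L a
        + (L false false - L true false) * stackelbergRegret L a
      = (L true true - L false false) * (L false false - L true false) * Fintype.card ι := by
  rw [externalRegret_bool hdom, stackelbergRegret_bool hdiag]
  ring

end TwoActions

/-- Exact regret identities in the incompatibility instance of Theorem 3.1.
The two actions `h, h'` are encoded as `false, true : Bool`; `L a b` is the learner's
expected loss when playing classifier `a` against agent responses tailored to `b`.
With `n` the number of rounds in which `h'` is played:
(i) the best fixed comparator against the realized responses has loss
`(1/20)(T−n) + (1/4)n`, so the external regret equals `(3/20)(T−n)`;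
(ii) the best fixed Stackelberg comparator has loss `T/5`, so the Stackelberg regret
equals `(1/20)n`; and consequently (iii) `R(T) + 3·𝓡(T) = (3/20)T`. -/
theorem incompatibility_instance_regret_identities
    (L : Bool → Bool → ℝ)
    (hhh : L false false = 1 / 5) (hhh' : L false true = 9 / 10)
    (hh'h : L true false = 1 / 20) (hh'h' : L true true = 1 / 4)
    (T : ℕ) (hT : 1 ≤ T) (a : Fin T → Bool)
    (n : ℕ) (hn : n = (Finset.univ.filter fun t => a t = true).card) :
    (min (∑ t, L false (a t)) (∑ t, L true (a t))
        = (1 / 20) * ((T : ℝ) - n) + (1 / 4) * n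
      ∧ (∑ t, L (a t) (a t)) - min (∑ t, L false (a t)) (∑ t, L true (a t))
        = (3 / 20) * ((T : ℝ) - n))
    ∧ (min ((T : ℝ) * L false false) ((T : ℝ) * L true true) = (T : ℝ) / 5
      ∧ (∑ t, L (a t) (a t)) - (T : ℝ) / 5 = (1 / 20) * n)
    ∧ ((∑ t, L (a t) (a t)) - min (∑ t, L false (a t)) (∑ t, L true (a t)))
        + 3 * ((∑ t, L (a t) (a t)) - (T : ℝ) / 5) = (3 / 20) * T := by
  have hdom : ∀ c b, L true b ≤ L c b := by
    simp only [Bool.forall_bool, hhh, hhh', hh'h, hh'h']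
    norm_num
  have hdiag : ∀ c, L false false ≤ L c c := by
    simp only [Bool.forall_bool, hhh, hh'h']
    norm_num
  have hmin : bestFixedLoss L a = min (∑ t, L false (a t)) (∑ t, L true (a t)) :=
    inf'_univ_bool _
  have hminS : bestStackelbergLoss L T = min (T * L false false) (T * L true true) :=
    inf'_univ_bool _
  have hbest : bestFixedLoss L a = (1 / 20) * ((T : ℝ) - n) + (1 / 4) * n := by
    rw [bestFixedLoss_eq_of_dominant hdom, sum_comp_bool (L true), hh'h, hh'h', ← hn,
      Fintype.card_fin]
  have hbestS : bestStackelbergLoss L T = (T : ℝ) / 5 := by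
    rw [bestStackelbergLoss_eq_of_forall_le hdiag, hhh, mul_one_div]
  have hext := externalRegret_bool hdom a
  have hstack := stackelbergRegret_bool hdiag a
  have htradeoff := externalRegret_stackelbergRegret_tradeoff hdom hdiag a
  simp only [externalRegret, stackelbergRegret, Fintype.card_fin, hbestS, ← hn, hhh, hh'h, hh'h']
    at hext hstack htradeoff
  rw [← hmin, ← hminS]
  refine ⟨⟨hbest, ?_⟩, ⟨hbestS, ?_⟩, ?_⟩ <;> linarith
end

section
/- Second-order regret bound for continuous exponential weights: let (𝒜, Σ, λ) be a measure space with 0 < λ(𝒜) < ∞, let η > 0, and let ℓ_1, …, ℓ_T : 𝒜 → [0, ∞) be measurable with ∫_𝒜 ℓ_t² dλ < ∞ for each t. Define weights w_t(α) = exp(−η · ∑_{τ=1}^{t−1} ℓ_τ(α)), normalizations W_t = ∫_𝒜 w_t dλ, and densities q_t = w_t / W_t. Suppose P ⊆ 𝒜 is measurable with λ(P) > 0 and α* ∈ P is such that ℓ_t(α) = ℓ_t(α*) for all α ∈ P and all t ∈ {1,…,T}. Then ∑_{t=1}^T ∫_𝒜 q_t(α) ℓ_t(α) dλ(α) − ∑_{t=1}^T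 ℓ_t(α*) ≤ (η/2) · ∑_{t=1}^T ∫_𝒜 q_t(α) ℓ_t(α)² dλ(α) + (1/η) · log(λ(𝒜) / λ(P)). -/
open MeasureTheory

/-!
With `L t = ∑_{τ<t} ℓ τ`, the normalization `W t` is the moment-generating function of `L t` under
`μ` at `-η`, and `q t` is the density of `μ` tilted by `-η L t`. Tilting turns the
cumulant-generating function of a sum into a sum of cumulant-generating functions, so
`log W T = log μ(𝒜) + ∑_t log E_{q t}[exp (-η ℓ t)]`. Each summand is at most
`-η E_{q t}[ℓ t] + (η²/2) E_{q t}[(ℓ t)²]`, since `exp y ≤ 1 + y + y²/2` for `y ≤ 0`, while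
Chernoff's bound on the lower tail of `L T` gives `log μ(P) ≤ η c + log W T` whenever
`L T ≤ c` on `P`.
-/

open ProbabilityTheory Real

lemma exp_le_one_add_add_sq_div_two_of_nonpos {y : ℝ} (hy : y ≤ 0) :
    exp y ≤ 1 + y + y ^ 2 / 2 := by
  have exp_neg_ge : 1 - y + y ^ 2 / 2 ≤ exp (-y) := by
    simpa [sub_eq_add_neg] using quadratic_le_exp_of_nonneg (neg_nonneg.2 hy)
  have pos : 0 < 1 - y + y ^ 2 / 2 := by nlinarith
  calc exp y = (exp (-y))⁻¹ := by rw [exp_neg, inv_inv]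
    _ ≤ (1 - y + y ^ 2 / 2)⁻¹ := inv_anti₀ pos exp_neg_ge
    _ ≤ 1 + y + y ^ 2 / 2 := by
      rw [inv_le_iff_one_le_mul₀ pos]
      -- The product is `(1 + y²/2)² - y² = 1 + y⁴/4`.
      nlinarith [sq_nonneg (y ^ 2)]

section MomentGenerating

variable {Ω : Type*} [MeasurableSpace Ω] {μ : Measure Ω} {X Y : Ω → ℝ} {t : ℝ}

lemma integrable_exp_mul_of_nonpos_of_nonneg [IsFiniteMeasure μ] (ht : t ≤ 0)
    (hX : AEMeasurable X μ) (hX_nonneg : 0 ≤ᵐ[μ] X) :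
    Integrable (fun ω ↦ exp (t * X ω)) μ := by
  have neg_le : ∀ᵐ ω ∂μ, -X ω ≤ 0 := hX_nonneg.mono fun ω hω ↦ neg_nonpos.2 hω
  simpa only [Pi.neg_apply, neg_mul_neg] using
    integrable_exp_mul_of_le (-t) 0 (neg_nonneg.2 ht) hX.neg neg_le

lemma cgf_le_of_nonpos_of_nonneg [IsProbabilityMeasure μ] (ht : t ≤ 0)
    (hX : MemLp X 2 μ) (hX_nonneg : 0 ≤ᵐ[μ] X) :
    cgf X μ t ≤ t * ∫ ω, X ω ∂μ + t ^ 2 / 2 * ∫ ω, X ω ^ 2 ∂μ := by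
  have exp_int := integrable_exp_mul_of_nonpos_of_nonneg ht hX.aemeasurable hX_nonneg
  have lin_int : Integrable (fun ω ↦ t * X ω) μ := (hX.integrable one_le_two).const_mul t
  have affine_int : Integrable (fun ω ↦ 1 + t * X ω) μ := (integrable_const 1).add lin_int
  have sq_int : Integrable (fun ω ↦ t ^ 2 / 2 * X ω ^ 2) μ := hX.integrable_sq.const_mul _
  have pointwise : ∀ᵐ ω ∂μ, exp (t * X ω) ≤ 1 + t * X ω + t ^ 2 / 2 * X ω ^ 2 := by
    filter_upwards [hX_nonneg] with ω hω
    convert exp_le_one_add_add_sq_div_two_of_nonpos (mul_nonpos_of_nonpos_of_nonneg ht hω) using 2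
    ring
  have mgf_le : mgf X μ t ≤ 1 + t * ∫ ω, X ω ∂μ + t ^ 2 / 2 * ∫ ω, X ω ^ 2 ∂μ :=
    calc mgf X μ t ≤ ∫ ω, (1 + t * X ω + t ^ 2 / 2 * X ω ^ 2) ∂μ :=
          integral_mono_ae exp_int (affine_int.add sq_int) pointwise
      _ = 1 + t * ∫ ω, X ω ∂μ + t ^ 2 / 2 * ∫ ω, X ω ^ 2 ∂μ := by
          rw [integral_add affine_int sq_int,
            integral_add (integrable_const 1) lin_int, integral_const_mul, integral_const_mul,
            integral_const, probReal_univ, one_smul]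
  calc cgf X μ t ≤ mgf X μ t - 1 := log_le_sub_one_of_pos (mgf_pos exp_int)
    _ ≤ t * ∫ ω, X ω ∂μ + t ^ 2 / 2 * ∫ ω, X ω ^ 2 ∂μ := by linarith

lemma cgf_add_eq_cgf_add_cgf_tilted [NeZero μ] (hX : Integrable (fun ω ↦ exp (t * X ω)) μ)
    (hXY : Integrable (fun ω ↦ exp (t * (X + Y) ω)) μ) :
    cgf (X + Y) μ t = cgf X μ t + cgf Y (μ.tilted (t * X ·)) t := by
  have mgf_tilted : mgf Y (μ.tilted (t * X ·)) t = mgf (X + Y) μ t / mgf X μ t := by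
    simp only [mgf, integral_exp_tilted, Pi.add_apply, mul_add]
  rw [cgf, cgf, cgf, mgf_tilted, log_div (mgf_pos_iff.2 hXY).ne' (mgf_pos_iff.2 hX).ne',
    add_sub_cancel]

lemma tilted_le_smul_of_le {f : Ω → ℝ} {b : ℝ} (hf : ∀ᵐ ω ∂μ, f ω ≤ b) :
    μ.tilted f ≤ ENNReal.ofReal (exp b / ∫ ω, exp (f ω) ∂μ) • μ := by
  rw [Measure.tilted, ← withDensity_const]
  refine withDensity_mono (hf.mono fun ω hω ↦ ENNReal.ofReal_le_ofReal ?_)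
  gcongr

end MomentGenerating

section ExponentialWeights

variable {𝒜 : Type*}

/-- The loss accumulated strictly before round `t`, with rounds counted from `0`. -/
def cumulativeLoss (ℓ : ℕ → 𝒜 → ℝ) (t : ℕ) (α : 𝒜) : ℝ :=
  ∑ τ ∈ Finset.range t, ℓ τ α

lemma cumulativeLoss_succ (ℓ : ℕ → 𝒜 → ℝ) (t : ℕ) :
    cumulativeLoss ℓ (t + 1) = cumulativeLoss ℓ t + ℓ t :=
  funext fun α ↦ Finset.sum_range_succ (ℓ · α) t

variable [MeasurableSpace 𝒜] {μ : Measure 𝒜} {η : ℝ} {ℓ : ℕ → 𝒜 → ℝ}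

/-- The distribution played in round `t` by exponential weights with learning rate `η` and base
measure `μ`: the probability measure whose density with respect to `μ` is proportional to
`exp (-η * cumulativeLoss ℓ t α)`, or the zero measure if that function is not integrable. -/
noncomputable def expWeights (μ : Measure 𝒜) (η : ℝ) (ℓ : ℕ → 𝒜 → ℝ) (t : ℕ) : Measure 𝒜 :=
  μ.tilted (-η * cumulativeLoss ℓ t ·)

lemma cumulativeLoss_nonneg (hℓ_nonneg : ∀ t, 0 ≤ᵐ[μ] ℓ t) (t : ℕ) :
    0 ≤ᵐ[μ] cumulativeLoss ℓ t := by
  filter_upwards [ae_all_iff.2 hℓ_nonneg] with α hα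
  exact Finset.sum_nonneg fun τ _ ↦ hα τ

lemma integrable_exp_neg_mul_cumulativeLoss [IsFiniteMeasure μ] (hη : 0 ≤ η)
    (hℓ : ∀ t, AEMeasurable (ℓ t) μ) (hℓ_nonneg : ∀ t, 0 ≤ᵐ[μ] ℓ t) (t : ℕ) :
    Integrable (fun α ↦ exp (-η * cumulativeLoss ℓ t α)) μ :=
  integrable_exp_mul_of_nonpos_of_nonneg (neg_nonpos.2 hη)
    (Finset.aemeasurable_fun_sum _ fun τ _ ↦ hℓ τ) (cumulativeLoss_nonneg hℓ_nonneg t)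

lemma memLp_expWeights {p : ENNReal} {f : 𝒜 → ℝ} (hη : 0 ≤ η)
    (hℓ_nonneg : ∀ t, 0 ≤ᵐ[μ] ℓ t) (hf : MemLp f p μ) (t : ℕ) :
    MemLp f p (expWeights μ η ℓ t) := by
  refine hf.of_measure_le_smul ENNReal.ofReal_ne_top (tilted_le_smul_of_le (b := 0) ?_)
  filter_upwards [cumulativeLoss_nonneg hℓ_nonneg t] with α hα
  exact mul_nonpos_of_nonpos_of_nonneg (neg_nonpos.2 hη) hα

lemma cgf_cumulativeLoss [IsFiniteMeasure μ] [NeZero μ] (hη : 0 ≤ η)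
    (hℓ : ∀ t, AEMeasurable (ℓ t) μ) (hℓ_nonneg : ∀ t, 0 ≤ᵐ[μ] ℓ t) (T : ℕ) :
    cgf (cumulativeLoss ℓ T) μ (-η) =
      log (μ.real Set.univ) + ∑ t ∈ Finset.range T, cgf (ℓ t) (expWeights μ η ℓ t) (-η) := by
  have exp_int := integrable_exp_neg_mul_cumulativeLoss hη hℓ hℓ_nonneg
  induction T with
  | zero => simp [cumulativeLoss, cgf, mgf]
  | succ T ih =>
    rw [cumulativeLoss_succ, cgf_add_eq_cgf_add_cgf_tilted (exp_int T)
      (cumulativeLoss_succ ℓ T ▸ exp_int (T + 1)), ih, Finset.sum_range_succ, add_assoc, expWeights]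

lemma cgf_expWeights_le [IsFiniteMeasure μ] [NeZero μ] (hη : 0 ≤ η)
    (hℓ : ∀ t, MemLp (ℓ t) 2 μ) (hℓ_nonneg : ∀ t, 0 ≤ᵐ[μ] ℓ t) (t : ℕ) :
    cgf (ℓ t) (expWeights μ η ℓ t) (-η) ≤
      -η * ∫ α, ℓ t α ∂expWeights μ η ℓ t + η ^ 2 / 2 * ∫ α, ℓ t α ^ 2 ∂expWeights μ η ℓ t := by
  have : IsProbabilityMeasure (expWeights μ η ℓ t) := isProbabilityMeasure_tilted
    (integrable_exp_neg_mul_cumulativeLoss hη (fun τ ↦ (hℓ τ).aemeasurable) hℓ_nonneg t)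
  simpa only [neg_sq] using cgf_le_of_nonpos_of_nonneg (neg_nonpos.2 hη)
    (memLp_expWeights hη hℓ_nonneg (hℓ t) t)
    ((tilted_absolutelyContinuous _ _).ae_le (hℓ_nonneg t))

lemma log_measureReal_le_of_cumulativeLoss_le [IsFiniteMeasure μ] (hη : 0 ≤ η)
    (hℓ : ∀ t, AEMeasurable (ℓ t) μ) (hℓ_nonneg : ∀ t, 0 ≤ᵐ[μ] ℓ t) {T : ℕ} {P : Set 𝒜}
    (hP : μ P ≠ 0) {c : ℝ} (hc : ∀ α ∈ P, cumulativeLoss ℓ T α ≤ c) :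
    log (μ.real P) ≤ η * c + cgf (cumulativeLoss ℓ T) μ (-η) := by
  have measure_pos : 0 < μ.real P := ENNReal.toReal_pos hP (measure_ne_top μ P)
  rw [log_le_iff_le_exp measure_pos]
  calc μ.real P ≤ μ.real {α | cumulativeLoss ℓ T α ≤ c} := measureReal_mono hc
    _ ≤ exp (-(-η) * c + cgf (cumulativeLoss ℓ T) μ (-η)) :=
      measure_le_le_exp_cgf c (neg_nonpos.2 hη)
        (integrable_exp_neg_mul_cumulativeLoss hη hℓ hℓ_nonneg T)
    _ = exp (η * c + cgf (cumulativeLoss ℓ T) μ (-η)) := by rw [neg_neg]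

theorem continuous_exponential_weights_second_order_regret_general [IsFiniteMeasure μ]
    (hη : 0 < η) (hℓ : ∀ t, MemLp (ℓ t) 2 μ) (hℓ_nonneg : ∀ t, 0 ≤ᵐ[μ] ℓ t) {T : ℕ} {P : Set 𝒜}
    (hP : μ P ≠ 0) {c : ℝ} (hc : ∀ α ∈ P, cumulativeLoss ℓ T α ≤ c) :
    (∑ t ∈ Finset.range T, ∫ α, ℓ t α ∂expWeights μ η ℓ t) - c ≤
      (η / 2) * ∑ t ∈ Finset.range T, ∫ α, ℓ t α ^ 2 ∂expWeights μ η ℓ t +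
        (1 / η) * log (μ.real Set.univ / μ.real P) := by
  have : NeZero μ := ⟨fun hμ ↦ hP (by simp [hμ])⟩
  have hℓ_meas t : AEMeasurable (ℓ t) μ := (hℓ t).aemeasurable
  have lower : log (μ.real P) ≤ η * c + (log (μ.real Set.univ) +
      ∑ t ∈ Finset.range T, cgf (ℓ t) (expWeights μ η ℓ t) (-η)) := by
    rw [← cgf_cumulativeLoss hη.le hℓ_meas hℓ_nonneg]
    exact log_measureReal_le_of_cumulativeLoss_le hη.le hℓ_meas hℓ_nonneg hP hc
  have upper : ∑ t ∈ Finset.range T, cgf (ℓ t) (expWeights μ η ℓ t) (-η) ≤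
      -η * ∑ t ∈ Finset.range T, ∫ α, ℓ t α ∂expWeights μ η ℓ t +
        η ^ 2 / 2 * ∑ t ∈ Finset.range T, ∫ α, ℓ t α ^ 2 ∂expWeights μ η ℓ t := by
    rw [Finset.mul_sum, Finset.mul_sum, ← Finset.sum_add_distrib]
    exact Finset.sum_le_sum fun t _ ↦ cgf_expWeights_le hη.le hℓ hℓ_nonneg t
  rw [log_div measureReal_univ_ne_zero (measureReal_ne_zero_iff (measure_ne_top μ P) |>.2 hP)]
  refine le_of_mul_le_mul_left ?_ hη
  field_simp
  linarith

end ExponentialWeights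

/-- Second-order regret bound for continuous exponential weights: with exponential
weights `w t α = exp(−η ∑_{τ<t} ℓ τ α)` over a base measure `μ` of positive finite total
mass, normalizations `W t = ∫ w t dμ` and densities `q t = w t / W t`, and a comparator
`α* ∈ P` lying in a measurable set of positive measure on which every loss is constant,
the cumulative expected loss exceeds the comparator's cumulative loss by at most
`(η/2)·∑_t ∫ q_t ℓ_t² dμ + (1/η)·log(μ(𝒜)/μ(P))`. -/
theorem continuous_exponential_weights_second_order_regret
    {𝒜 : Type*} [MeasurableSpace 𝒜] (μ : Measure 𝒜)
    (h0 : 0 < μ Set.univ) (hfin : μ Set.univ < ⊤)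
    (η : ℝ) (hη : 0 < η) (T : ℕ)
    (ℓ : ℕ → 𝒜 → ℝ)
    (hmeas : ∀ t, Measurable (ℓ t))
    (hnn : ∀ t α, 0 ≤ ℓ t α)
    (hint : ∀ t, Integrable (fun α => (ℓ t α) ^ 2) μ)
    (w : ℕ → 𝒜 → ℝ)
    (hw : ∀ t α, w t α = Real.exp (-η * ∑ τ ∈ Finset.range t, ℓ τ α))
    (W : ℕ → ℝ) (hW : ∀ t, W t = ∫ α, w t α ∂μ)
    (q : ℕ → 𝒜 → ℝ) (hq : ∀ t α, q t α = w t α / W t)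
    (P : Set 𝒜) (hP : MeasurableSet P) (hPpos : 0 < μ P)
    (αs : 𝒜) (hαs : αs ∈ P)
    (hconst : ∀ α ∈ P, ∀ t < T, ℓ t α = ℓ t αs) :
    (∑ t ∈ Finset.range T, ∫ α, q t α * ℓ t α ∂μ) - ∑ t ∈ Finset.range T, ℓ t αs ≤
      (η / 2) * ∑ t ∈ Finset.range T, ∫ α, q t α * (ℓ t α) ^ 2 ∂μ +
        (1 / η) * Real.log ((μ Set.univ).toReal / (μ P).toReal) := by
  have : IsFiniteMeasure μ := ⟨hfin⟩
  have integral_q (t : ℕ) (g : 𝒜 → ℝ) : ∫ α, q t α * g α ∂μ = ∫ α, g α ∂expWeights μ η ℓ t := by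
    simp only [expWeights, integral_tilted, cumulativeLoss, smul_eq_mul, hq, hW, hw]
  simp only [integral_q]
  exact continuous_exponential_weights_second_order_regret_general hη
    (fun t ↦ (memLp_two_iff_integrable_sq (hmeas t).aestronglyMeasurable).2 (hint t))
    (fun t ↦ ae_of_all _ (hnn t)) hPpos.ne'
    fun α hα ↦ (Finset.sum_congr rfl fun t ht ↦ hconst α hα t (Finset.mem_range.1 ht)).le
end
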